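/- arXiv:1012.5591 — 2 statements merged into one kernel-verified Lean document; each statement's English description precedes it below -/
import Mathlib

section
/- For every u ∈ Σ and every r ∈ (0, 1], the value of u on the circle of radius r satisfies u(r)² ≤ ((1 − r²)/(2π r)) · H_{B \ B_r}(u), where B_r is the open disc of radius r centered at the origin. -/
/-!
Let `n` be the dimension, `B` the unit ball and `k = n - 1`. In polar coordinates the Hardy energy
of a radial function with profile `f` on the annulus `r ≤ ‖x‖ < R` is at least
`n |B| ∫_r^R t ^ k (f'² - f² / (1 - t²)²) dt`, because the derivative of `f` is dominated by
the full derivative. With the weight `P t = t ^ k / (1 - t²)`, completing the square shows that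
`t ^ k (f'² - f² / (1 - t²)²) + (P f²)'` is a sum of nonnegative terms as soon as `k ≥ 1`.
Integrating up to a radius `R < 1` beyond which `f` vanishes leaves the lower bound `P(r) f(r)²`.
-/

open MeasureTheory Real Filter

noncomputable section

/-- `ℝ²` as a Euclidean space. -/
abbrev E2 : Type := EuclideanSpace ℝ (Fin 2)

/-- The open unit disc in `ℝ²`. -/
def B2 : Set E2 := Metric.ball 0 1

/-- `u ∈ C_c^∞(B)`: a smooth function with compact support contained in the open unit disc. -/
def IsTest (u : E2 → ℝ) : Prop :=
  ContDiff ℝ (⊤ : ℕ∞) u ∧ HasCompactSupport u ∧ tsupport u ⊆ B2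

/-- `u ∈ Σ`: a smooth compactly supported function on the unit disc which is radially
symmetric and nonincreasing in the radius (encoded as: `‖x‖ ≤ ‖y‖ → u y ≤ u x`, which is
equivalent to radial symmetry together with monotonicity in `r`). -/
def IsSigma (u : E2 → ℝ) : Prop :=
  IsTest u ∧ ∀ x y : E2, ‖x‖ ≤ ‖y‖ → u y ≤ u x

/-- The localized Hardy functional `H_Ω(u) = ∫_Ω |∇u|² − ∫_Ω u²/(1−|x|²)²`. -/
def HOn (Ω : Set E2) (u : E2 → ℝ) : ℝ :=
  (∫ x in Ω, ‖gradient u x‖ ^ 2) - ∫ x in Ω, (u x) ^ 2 / (1 - ‖x‖ ^ 2) ^ 2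

/-- The Hardy functional `H(u) = H_B(u)`. -/
def H (u : E2 → ℝ) : ℝ := HOn B2 u

/-- The point `(r, 0) ∈ ℝ²`, used to evaluate a radial function at radius `r`. -/
def pt (r : ℝ) : E2 := EuclideanSpace.single 0 r

open Metric Set Module

section OneDimensional

lemma hasDerivAt_pow_div_one_sub_sq_mul_sq {f : ℝ → ℝ} {f' t : ℝ} (k : ℕ)
    (hf : HasDerivAt f f' t) (ht : 1 - t ^ 2 ≠ 0) :
    HasDerivAt (fun s => s ^ k / (1 - s ^ 2) * f s ^ 2)
      ((k * t ^ (k - 1) / (1 - t ^ 2) + 2 * t ^ (k + 1) / (1 - t ^ 2) ^ 2) * f t ^ 2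
        + t ^ k / (1 - t ^ 2) * (2 * f t * f')) t := by
  have hden : HasDerivAt (fun s : ℝ => 1 - s ^ 2) (-(2 * t)) t := by
    simpa using (hasDerivAt_pow 2 t).const_sub 1
  refine (((hasDerivAt_pow k t).div hden ht).mul (hf.pow 2)).congr_deriv ?_
  simp only [Pi.div_apply, Pi.pow_apply, Nat.cast_ofNat, Nat.add_one_sub_one, pow_one]
  field_simp
  ring

/-- With `a = f t` and `b = f' t`, the left-hand side is minus the derivative computed in
`hasDerivAt_pow_div_one_sub_sq_mul_sq`. -/
lemma neg_deriv_le_pow_mul_hardy_density {k : ℕ} (hk : k ≠ 0) {t : ℝ} (ht0 : 0 ≤ t) (ht1 : t < 1)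
    (a b : ℝ) :
    -((k * t ^ (k - 1) / (1 - t ^ 2) + 2 * t ^ (k + 1) / (1 - t ^ 2) ^ 2) * a ^ 2
        + t ^ k / (1 - t ^ 2) * (2 * a * b))
      ≤ t ^ k * (b ^ 2 - a ^ 2 / (1 - t ^ 2) ^ 2) := by
  obtain ⟨m, rfl⟩ := Nat.exists_eq_succ_of_ne_zero hk
  have hden : 1 - t ^ 2 ≠ 0 := by nlinarith
  have : 0 ≤ 1 - t := by linarith
  have complete_square :
      t ^ (m + 1) * (b ^ 2 - a ^ 2 / (1 - t ^ 2) ^ 2)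
        + (((m + 1 : ℕ) * t ^ m / (1 - t ^ 2) + 2 * t ^ (m + 2) / (1 - t ^ 2) ^ 2) * a ^ 2
          + t ^ (m + 1) / (1 - t ^ 2) * (2 * a * b))
      = t ^ (m + 1) * (b + a / (1 - t ^ 2)) ^ 2
        + t ^ m * (1 - t) * ((1 - t) + m * (1 + t)) * (a / (1 - t ^ 2)) ^ 2 := by
    push_cast
    field_simp
    ring
  have : 0 ≤ t ^ (m + 1) * (b + a / (1 - t ^ 2)) ^ 2
      + t ^ m * (1 - t) * ((1 - t) + m * (1 + t)) * (a / (1 - t ^ 2)) ^ 2 := by positivity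
  simp only [Nat.succ_eq_add_one, Nat.add_sub_cancel]
  linarith

theorem sub_le_integral_pow_mul_hardy_density {k : ℕ} (hk : k ≠ 0) {f f' : ℝ → ℝ} {r R : ℝ}
    (hr : 0 ≤ r) (hrR : r ≤ R) (hR : R < 1) (hf : ContinuousOn f (Icc r R))
    (hf' : ∀ t ∈ Ioo r R, HasDerivAt f (f' t) t)
    (hint : IntegrableOn (fun t => t ^ k * (f' t ^ 2 - f t ^ 2 / (1 - t ^ 2) ^ 2)) (Icc r R)) :
    r ^ k / (1 - r ^ 2) * f r ^ 2 - R ^ k / (1 - R ^ 2) * f R ^ 2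
      ≤ ∫ t in r..R, t ^ k * (f' t ^ 2 - f t ^ 2 / (1 - t ^ 2) ^ 2) := by
  have hden : ∀ t ∈ Icc r R, 1 - t ^ 2 ≠ 0 := fun t ht => by nlinarith [ht.1, ht.2]
  have hcont : ContinuousOn (fun t => -(t ^ k / (1 - t ^ 2) * f t ^ 2)) (Icc r R) :=
    (((continuousOn_pow k).div (by fun_prop) hden).mul (hf.pow 2)).neg
  have := intervalIntegral.sub_le_integral_of_hasDeriv_right_of_le hrR hcont
    (fun t ht => (hasDerivAt_pow_div_one_sub_sq_mul_sq k (hf' t ht)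
      (hden t (Ioo_subset_Icc_self ht))).neg.hasDerivWithinAt)
    hint (fun t ht => neg_deriv_le_pow_mul_hardy_density hk (hr.trans ht.1.le) (ht.2.trans hR) _ _)
  linarith

lemma integrableOn_pow_mul_hardy_density (k : ℕ) {f f' : ℝ → ℝ} {r R : ℝ} (hr : 0 ≤ r)
    (hR : R < 1) (hf : ContinuousOn f (Icc r R)) (hf' : ContinuousOn f' (Icc r R)) :
    IntegrableOn (fun t => t ^ k * (f' t ^ 2 - f t ^ 2 / (1 - t ^ 2) ^ 2)) (Icc r R) := by
  refine ContinuousOn.integrableOn_Icc ((continuousOn_pow k).mul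
    ((hf'.pow 2).sub ((hf.pow 2).div (by fun_prop) fun t ht => pow_ne_zero 2 ?_)))
  nlinarith [ht.1, ht.2]

end OneDimensional

section Radial

variable {E : Type*} [NormedAddCommGroup E]

/-- A function on a normed group is radial if its value at a point depends only on the norm of that
point. -/
def IsRadial {α : Type*} (u : E → α) : Prop :=
  ∀ ⦃x y : E⦄, ‖x‖ = ‖y‖ → u x = u y

variable [NormedSpace ℝ E]

lemma IsRadial.apply_norm_smul {α : Type*} {u : E → α} (hu : IsRadial u) {e : E} (he : ‖e‖ = 1)
    (x : E) : u (‖x‖ • e) = u x :=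
  hu (by rw [norm_smul, norm_norm, he, mul_one])

lemma exists_norm_eq_one_norm_smul_eq [Nontrivial E] (x : E) : ∃ e : E, ‖e‖ = 1 ∧ ‖x‖ • e = x := by
  rcases eq_or_ne x 0 with rfl | hx
  · obtain ⟨e, he⟩ := exists_norm_eq E zero_le_one
    exact ⟨e, he, by simp⟩
  · exact ⟨‖x‖⁻¹ • x, norm_smul_inv_norm (𝕜 := ℝ) hx, smul_inv_smul₀ (norm_ne_zero_iff.2 hx) x⟩

lemma IsRadial.norm_deriv_smul_le {F : Type*} [NormedAddCommGroup F] [NormedSpace ℝ F] {u : E → F}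
    (hu : IsRadial u) {e x : E} (he : ‖e‖ = 1) (hx : DifferentiableAt ℝ u x) :
    ‖deriv (fun t : ℝ => u (t • e)) ‖x‖‖ ≤ ‖fderiv ℝ u x‖ := by
  have : Nontrivial E := nontrivial_of_ne e 0 (norm_ne_zero_iff.1 (by simp [he]))
  obtain ⟨d, hd, hxd⟩ := exists_norm_eq_one_norm_smul_eq x
  have same_profile : (fun t : ℝ => u (t • e)) = fun t : ℝ => u (t • d) :=
    funext fun t => hu (by rw [norm_smul, norm_smul, he, hd])
  have hderiv : HasDerivAt (fun t : ℝ => u (t • d)) (fderiv ℝ u x d) ‖x‖ := by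
    have hline : HasDerivAt (fun t : ℝ => t • d) d ‖x‖ := by
      simpa using (hasDerivAt_id ‖x‖).smul_const d
    have hux : HasFDerivAt u (fderiv ℝ u x) (‖x‖ • d) := by
      simpa only [hxd] using hx.hasFDerivAt
    exact hux.comp_hasDerivAt ‖x‖ hline
  rw [same_profile, hderiv.deriv]
  exact (fderiv ℝ u x).unit_le_opNorm d hd.le

variable [FiniteDimensional ℝ E] [MeasurableSpace E] [BorelSpace E]

theorem setIntegral_annulus_fun_norm {F : Type*} [NormedAddCommGroup F] [NormedSpace ℝ F]
    [Nontrivial E] (μ : Measure E) [μ.IsAddHaarMeasure] {r R : ℝ} (hr : 0 ≤ r) (hrR : r ≤ R)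
    (g : ℝ → F) :
    ∫ x in ball (0 : E) R \ ball 0 r, g ‖x‖ ∂μ
      = finrank ℝ E • μ.real (ball 0 1) • ∫ t in r..R, t ^ (finrank ℝ E - 1) • g t := by
  have hann : ball (0 : E) R \ ball 0 r = norm ⁻¹' Ico r R := by
    ext x
    simp [and_comm]
  calc ∫ x in ball (0 : E) R \ ball 0 r, g ‖x‖ ∂μ
      = ∫ x, (Ico r R).indicator g ‖x‖ ∂μ := by
        rw [hann, ← integral_indicator (measurableSet_Ico.preimage measurable_norm)]
        rfl
    _ = finrank ℝ E • μ.real (ball 0 1) •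
          ∫ t in Ici 0, (Ico r R).indicator (fun t => t ^ (finrank ℝ E - 1) • g t) t := by
        simp only [integral_fun_norm_addHaar μ, integral_Ici_eq_integral_Ioi, indicator_smul]
    _ = _ := by
        rw [setIntegral_indicator measurableSet_Ico,
          inter_eq_self_of_subset_right (Ico_subset_Ici_self.trans (Ici_subset_Ici.2 hr)),
          integral_Ico_eq_integral_Ioc, intervalIntegral.integral_of_le hrR]

end Radial

section HardyEnergy

variable {E : Type*} [NormedAddCommGroup E] [NormedSpace ℝ E] [MeasurableSpace E]

/-- The Hardy energy `∫_Ω ‖Du‖² - ∫_Ω u² / (1 - ‖x‖²)²` on the unit ball of a normed space, with the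
Fréchet derivative in place of the gradient so that no inner product is needed. -/
def hardyEnergy (μ : Measure E) (Ω : Set E) (u : E → ℝ) : ℝ :=
  (∫ x in Ω, ‖fderiv ℝ u x‖ ^ 2 ∂μ) - ∫ x in Ω, u x ^ 2 / (1 - ‖x‖ ^ 2) ^ 2 ∂μ

lemma hardyEnergy_eq_of_subset {μ : Measure E} {Ω Ω' : Set E} {u : E → ℝ} (hΩ : MeasurableSet Ω)
    (hsub : Ω' ⊆ Ω) (hu : ∀ x ∈ Ω \ Ω', x ∉ tsupport u) :
    hardyEnergy μ Ω u = hardyEnergy μ Ω' u := by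
  unfold hardyEnergy
  congr 1 <;> refine setIntegral_eq_of_subset_of_forall_sdiff_eq_zero hΩ hsub fun x hx => ?_
  · simp [fderiv_of_notMem_tsupport (𝕜 := ℝ) (hu x hx)]
  · simp [image_eq_zero_of_notMem_tsupport (hu x hx)]

variable [BorelSpace E] [FiniteDimensional ℝ E]

lemma integrableOn_div_one_sub_norm_sq_sq {μ : Measure E} [IsFiniteMeasureOnCompacts μ]
    {v : E → ℝ} (hv : Continuous v) {R : ℝ} (hR : R < 1) :
    IntegrableOn (fun x => v x / (1 - ‖x‖ ^ 2) ^ 2) (closedBall 0 R) μ := by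
  refine ContinuousOn.integrableOn_compact (isCompact_closedBall 0 R)
    (hv.continuousOn.div (by fun_prop) fun x hx => pow_ne_zero 2 ?_)
  nlinarith [mem_closedBall_zero_iff.1 hx, norm_nonneg x]

theorem IsRadial.integral_le_hardyEnergy_annulus (μ : Measure E) [μ.IsAddHaarMeasure] {u : E → ℝ}
    (hu : IsRadial u) (hu1 : ContDiff ℝ 1 u) {e : E} (he : ‖e‖ = 1) {r R : ℝ} (hr : 0 ≤ r)
    (hrR : r ≤ R) (hR : R < 1) :
    finrank ℝ E * μ.real (ball 0 1) * ∫ t in r..R, t ^ (finrank ℝ E - 1) *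
        (deriv (fun s : ℝ => u (s • e)) t ^ 2 - u (t • e) ^ 2 / (1 - t ^ 2) ^ 2)
      ≤ hardyEnergy μ (ball 0 R \ ball 0 r) u := by
  have : Nontrivial E := nontrivial_of_ne e 0 (norm_ne_zero_iff.1 (by simp [he]))
  set A : Set E := ball 0 R \ ball 0 r
  set f : ℝ → ℝ := fun s => u (s • e)
  have hA : A ⊆ closedBall 0 R := sdiff_subset.trans ball_subset_closedBall
  have hf' : Continuous (deriv f) :=
    ContDiff.continuous_deriv (n := 1) (by fun_prop) le_rfl
  have integrable_of_continuous {v : E → ℝ} (hv : Continuous v) : IntegrableOn v A μ :=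
    (hv.continuousOn.integrableOn_compact (isCompact_closedBall 0 R)).mono_set hA
  have hgrad : IntegrableOn (fun x => ‖fderiv ℝ u x‖ ^ 2) A μ :=
    integrable_of_continuous ((hu1.continuous_fderiv one_ne_zero).norm.pow 2)
  have hrad : IntegrableOn (fun x : E => deriv f ‖x‖ ^ 2) A μ :=
    integrable_of_continuous ((hf'.comp continuous_norm).pow 2)
  have hpot : IntegrableOn (fun x => u x ^ 2 / (1 - ‖x‖ ^ 2) ^ 2) A μ :=
    (integrableOn_div_one_sub_norm_sq_sq (hu1.continuous.pow 2) hR).mono_set hA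
  calc _ = ∫ x in A, (deriv f ‖x‖ ^ 2 - f ‖x‖ ^ 2 / (1 - ‖x‖ ^ 2) ^ 2) ∂μ := by
        rw [setIntegral_annulus_fun_norm μ hr hrR
          (fun t => deriv f t ^ 2 - f t ^ 2 / (1 - t ^ 2) ^ 2)]
        simp only [nsmul_eq_mul, smul_eq_mul, mul_assoc, f]
    _ = (∫ x in A, deriv f ‖x‖ ^ 2 ∂μ) - ∫ x in A, u x ^ 2 / (1 - ‖x‖ ^ 2) ^ 2 ∂μ := by
        simp only [f, hu.apply_norm_smul he]
        exact integral_sub hrad hpot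
    _ ≤ hardyEnergy μ A u := by
        refine sub_le_sub_right (integral_mono hrad hgrad fun x => ?_) _
        exact sq_le_sq.2 (by simpa [Real.norm_eq_abs] using
          hu.norm_deriv_smul_le he (hu1.differentiable one_ne_zero x))

theorem IsRadial.pow_div_mul_sq_le_hardyEnergy (μ : Measure E) [μ.IsAddHaarMeasure]
    (hdim : 2 ≤ finrank ℝ E) {u : E → ℝ} (hu : IsRadial u) (hu1 : ContDiff ℝ 1 u)
    (hsupp : tsupport u ⊆ ball 0 1) {x : E} (hx : ‖x‖ < 1) :
    finrank ℝ E * μ.real (ball 0 1) * (‖x‖ ^ (finrank ℝ E - 1) / (1 - ‖x‖ ^ 2) * u x ^ 2)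
      ≤ hardyEnergy μ (ball 0 1 \ ball 0 ‖x‖) u := by
  have : Nontrivial E := Module.nontrivial_of_finrank_pos (R := ℝ) (by lia)
  obtain ⟨e, he, hxe⟩ := exists_norm_eq_one_norm_smul_eq x
  obtain ⟨R₀, hR₀, hsuppR₀⟩ := exists_lt_subset_ball (isClosed_tsupport u) hsupp
  obtain ⟨R, hR, hR1⟩ := exists_between (max_lt hx hR₀)
  have hxR : ‖x‖ ≤ R := (le_max_left _ _).trans hR.le
  have hsuppR : tsupport u ⊆ ball 0 R :=
    hsuppR₀.trans (ball_subset_ball ((le_max_right _ _).trans hR.le))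
  have hzero : u (R • e) = 0 := image_eq_zero_of_notMem_tsupport fun h => by
    have := mem_ball_zero_iff.1 (hsuppR h)
    rw [norm_smul, he, mul_one, Real.norm_eq_abs] at this
    exact this.not_ge (le_abs_self R)
  have hf : ContDiff ℝ 1 fun t : ℝ => u (t • e) := by fun_prop
  have hprofile := sub_le_integral_pow_mul_hardy_density (by lia : finrank ℝ E - 1 ≠ 0)
    (norm_nonneg x) hxR hR1 hf.continuous.continuousOn
    (fun t _ => (hf.differentiable one_ne_zero t).hasDerivAt)
    (integrableOn_pow_mul_hardy_density _ (norm_nonneg x) hR1 hf.continuous.continuousOn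
      (hf.continuous_deriv le_rfl).continuousOn)
  simp only [hxe, hzero, ne_eq, OfNat.ofNat_ne_zero, not_false_eq_true, zero_pow, mul_zero,
    sub_zero] at hprofile
  calc _ ≤ _ := mul_le_mul_of_nonneg_left hprofile (by positivity)
    _ ≤ hardyEnergy μ (ball 0 R \ ball 0 ‖x‖) u :=
        hu.integral_le_hardyEnergy_annulus μ hu1 he (norm_nonneg x) hxR hR1
    _ = hardyEnergy μ (ball 0 1 \ ball 0 ‖x‖) u := by
        refine (hardyEnergy_eq_of_subset (measurableSet_ball.diff measurableSet_ball)
          (sdiff_subset_sdiff_left (ball_subset_ball hR1.le)) fun y hy hyu => ?_).symm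
        exact hy.2 ⟨hsuppR hyu, hy.1.2⟩

theorem pointwise_bound_by_exterior_energy_general (μ : Measure E) [μ.IsAddHaarMeasure]
    (hdim : 2 ≤ finrank ℝ E) {u : E → ℝ} (hu : IsRadial u) (hu1 : ContDiff ℝ 1 u)
    (hsupp : tsupport u ⊆ ball 0 1) {x : E} (hx : x ≠ 0) :
    u x ^ 2 ≤ (1 - ‖x‖ ^ 2) / (finrank ℝ E * μ.real (ball 0 1) * ‖x‖ ^ (finrank ℝ E - 1))
      * hardyEnergy μ (ball 0 1 \ ball 0 ‖x‖) u := by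
  rcases le_or_gt 1 ‖x‖ with hx1 | hx1
  · have hux : u x = 0 := image_eq_zero_of_notMem_tsupport fun h =>
      (mem_ball_zero_iff.1 (hsupp h)).not_ge hx1
    simp [hux, sdiff_eq_empty.2 (ball_subset_ball hx1), hardyEnergy]
  · have hx0 : 0 < ‖x‖ := norm_pos_iff.2 hx
    have hden : 0 < 1 - ‖x‖ ^ 2 := by nlinarith
    have : (0 : ℝ) < finrank ℝ E := by exact_mod_cast (by lia : 0 < finrank ℝ E)
    have hball : 0 < μ.real (ball 0 1) :=
      ENNReal.toReal_pos (measure_ball_pos μ 0 one_pos).ne' measure_ball_lt_top.ne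
    rw [← div_le_iff₀' (by positivity)]
    refine le_trans (le_of_eq ?_) (hu.pow_div_mul_sq_le_hardyEnergy μ hdim hu1 hsupp hx1)
    field_simp

end HardyEnergy

section Plane

lemma HOn_eq_hardyEnergy (Ω : Set E2) (u : E2 → ℝ) : HOn Ω u = hardyEnergy volume Ω u := by
  simp only [HOn, hardyEnergy, gradient, LinearIsometryEquiv.norm_map]

lemma IsSigma.isRadial {u : E2 → ℝ} (hu : IsSigma u) : IsRadial u :=
  fun x y h => le_antisymm (hu.2 y x h.ge) (hu.2 x y h.le)

lemma norm_pt {r : ℝ} (hr : 0 ≤ r) : ‖pt r‖ = r := by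
  simp [pt, abs_of_nonneg hr]

lemma measureReal_unitBall_E2 : volume.real (ball (0 : E2) 1) = π := by
  simp [Measure.real, EuclideanSpace.volume_ball_fin_two, pi_pos.le]

end Plane

/-- Lemma 3 (inequality (2.3)): for `u ∈ Σ` and `r ∈ (0, 1]`,
`u(r)² ≤ ((1 − r²)/(2πr)) · H_{B \ B_r}(u)`. -/
theorem pointwise_bound_by_exterior_energy :
    ∀ u : E2 → ℝ, IsSigma u → ∀ r : ℝ, 0 < r → r ≤ 1 →
      (u (pt r)) ^ 2 ≤ (1 - r ^ 2) / (2 * π * r) * HOn (B2 \ Metric.ball 0 r) u := by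
  intro u hu r hr _
  have hpt : ‖pt r‖ = r := norm_pt hr.le
  simpa only [hpt, HOn_eq_hardyEnergy, B2, measureReal_unitBall_E2, finrank_euclideanSpace_fin,
    Nat.cast_ofNat, Nat.add_one_sub_one, pow_one] using
    pointwise_bound_by_exterior_energy_general volume (x := pt r) (by simp) hu.isRadial
      (hu.1.1.of_le (by simp)) hu.1.2.2 (norm_pos_iff.1 (hpt.symm ▸ hr))
end
end

section
/- For every u ∈ Σ and every r ∈ (0, 1), one has π (1/2 − r²) A_u(r) ≤ H(u) + π u(r)²/(1 − r²), where A_u(r) = (1/(π r²)) ∫_{B_r} u(x)²/(1−|x|²)² dx and B_r is the open disc of radius r centered at the origin. -/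
/-!
After integration in polar coordinates the claim concerns the profile `f` of `u`. For any real `k`,
expanding `0 ≤ s (f' + k s f / (1 - s²))²` gives
`s f'² - (2k - k² s²) s f² / (1 - s²)² ≥ -(k s² f² / (1 - s²))'`,
and the right-hand side integrates to boundary terms. On `[r, 1]` take `k = 1`, which leaves
`r² f(r)² / (1 - r²)` because `f` vanishes near `1`. On `[0, r]` take `k = (1/2 + r²) / r²`, for
which the two boundary terms at `r` add up to `f(r)² / (2 (1 - r²))`; there
`2k - k² s² ≥ 1 + (3/4 - r⁴) / r²`, and the excess over `1` is the gain on the disc of radius `r`.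
It is at least what is claimed, as `1/2 - r² ≤ 3/4 - r⁴`.
-/

open MeasureTheory Real Filter

noncomputable section

section Interval

variable {f f' : ℝ → ℝ} {a c : ℝ}

lemma sub_le_integral_of_riccati {p β b' V : ℝ → ℝ} (hac : a ≤ c)
    (hp : ∀ s ∈ Set.Icc a c, 0 ≤ p s)
    (hb : ∀ s ∈ Set.Icc a c, HasDerivAt (fun s => p s * β s) (b' s) s)
    (hf : ∀ s ∈ Set.Icc a c, HasDerivAt f (f' s) s)
    (hV : ∀ s ∈ Set.Icc a c, V s + p s * β s ^ 2 ≤ b' s)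
    (hint : IntegrableOn (fun s => p s * f' s ^ 2 - V s * f s ^ 2) (Set.Icc a c)) :
    p a * β a * f a ^ 2 - p c * β c * f c ^ 2
      ≤ ∫ s in a..c, (p s * f' s ^ 2 - V s * f s ^ 2) := by
  have hderiv (s) (hs : s ∈ Set.Icc a c) : HasDerivAt (fun s => -(p s * β s * f s ^ 2))
      (-(b' s * f s ^ 2 + p s * β s * (2 * f s * f' s))) s := by
    refine ((hb s hs).mul ((hf s hs).pow 2)).neg.congr_deriv ?_
    simp
  have hbound (s) (hs : s ∈ Set.Icc a c) :
      -(b' s * f s ^ 2 + p s * β s * (2 * f s * f' s)) ≤ p s * f' s ^ 2 - V s * f s ^ 2 := by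
    have hsquare : 0 ≤ p s * (f' s + β s * f s) ^ 2 := mul_nonneg (hp s hs) (sq_nonneg _)
    have hriccati := mul_le_mul_of_nonneg_right (hV s hs) (sq_nonneg (f s))
    linarith
  have hFTC := intervalIntegral.sub_le_integral_of_hasDeriv_right_of_le hac
    (fun s hs => (hderiv s hs).continuousAt.continuousWithinAt)
    (fun s hs => (hderiv s (Set.Ioo_subset_Icc_self hs)).hasDerivWithinAt) hint
    (fun s hs => hbound s (Set.Ioo_subset_Icc_self hs))
  linarith

lemma one_sub_sq_pos_of_mem_Icc (ha : -1 < a) (hc : c < 1) {s : ℝ} (hs : s ∈ Set.Icc a c) :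
    0 < 1 - s ^ 2 := by
  nlinarith [hs.1, hs.2]

lemma continuousOn_mul_sq_div_one_sub_sq_sq (ha : -1 < a) (hc : c < 1)
    (hf : ContinuousOn f (Set.Icc a c)) :
    ContinuousOn (fun s => s * (f s ^ 2 / (1 - s ^ 2) ^ 2)) (Set.Icc a c) :=
  continuousOn_id.mul ((hf.pow 2).div (by fun_prop) fun _ hs =>
    pow_ne_zero 2 (one_sub_sq_pos_of_mem_Icc ha hc hs).ne')

lemma hasDerivAt_mul_mul_div_one_sub_sq (k : ℝ) {s : ℝ} (hs : 1 - s ^ 2 ≠ 0) :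
    HasDerivAt (fun s => s * (k * (s / (1 - s ^ 2)))) (2 * k * s / (1 - s ^ 2) ^ 2) s := by
  have hden : HasDerivAt (fun s : ℝ => 1 - s ^ 2) (-(2 * s)) s := by
    simpa using (hasDerivAt_pow 2 s).const_sub 1
  refine ((hasDerivAt_id s).mul (((hasDerivAt_id s).div hden hs).const_mul k)).congr_deriv ?_
  simp only [id_eq, Pi.div_apply]
  field_simp
  ring

lemma hardy_interval {k m : ℝ} (ha : 0 ≤ a) (hac : a ≤ c) (hc : c < 1)
    (hm : m ≤ 2 * k - k ^ 2 * c ^ 2) (hf : ∀ s ∈ Set.Icc a c, HasDerivAt f (f' s) s)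
    (hf' : ContinuousOn f' (Set.Icc a c)) :
    k * (a ^ 2 / (1 - a ^ 2)) * f a ^ 2 - k * (c ^ 2 / (1 - c ^ 2)) * f c ^ 2
      ≤ (∫ s in a..c, s * f' s ^ 2) - m * ∫ s in a..c, s * (f s ^ 2 / (1 - s ^ 2) ^ 2) := by
  have hpos (s) (hs : s ∈ Set.Icc a c) : 0 < 1 - s ^ 2 :=
    one_sub_sq_pos_of_mem_Icc (by linarith) hc hs
  have henergy : ContinuousOn (fun s => s * f' s ^ 2) (Set.Icc a c) := by fun_prop
  have hpotential : ContinuousOn (fun s => m * (s * (f s ^ 2 / (1 - s ^ 2) ^ 2))) (Set.Icc a c) :=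
    continuousOn_const.mul <| continuousOn_mul_sq_div_one_sub_sq_sq (by linarith) hc
      fun s hs => (hf s hs).continuousAt.continuousWithinAt
  have hweight (s : ℝ) :
      m * (s * (f s ^ 2 / (1 - s ^ 2) ^ 2)) = m * s / (1 - s ^ 2) ^ 2 * f s ^ 2 := by ring
  have hriccati (s) (hs : s ∈ Set.Icc a c) :
      m * s / (1 - s ^ 2) ^ 2 + s * (k * (s / (1 - s ^ 2))) ^ 2 ≤ 2 * k * s / (1 - s ^ 2) ^ 2 := by
    have hs0 : 0 ≤ s := ha.trans hs.1
    have hcs : k ^ 2 * s ^ 2 ≤ k ^ 2 * c ^ 2 := by gcongr; exact hs.2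
    calc m * s / (1 - s ^ 2) ^ 2 + s * (k * (s / (1 - s ^ 2))) ^ 2
        = (m + k ^ 2 * s ^ 2) * s / (1 - s ^ 2) ^ 2 := by rw [mul_pow, div_pow]; ring
      _ ≤ 2 * k * s / (1 - s ^ 2) ^ 2 := by gcongr; linarith
  have hintegral := sub_le_integral_of_riccati hac (fun s hs => ha.trans hs.1)
    (fun s hs => hasDerivAt_mul_mul_div_one_sub_sq k (hpos s hs).ne') hf hriccati
    ((henergy.sub hpotential).integrableOn_Icc.congr_fun
      (fun s _ => congrArg (s * f' s ^ 2 - ·) (hweight s)) measurableSet_Icc)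
  simp only [← hweight] at hintegral
  rw [intervalIntegral.integral_sub (henergy.intervalIntegrable_of_Icc hac)
    (hpotential.intervalIntegrable_of_Icc hac), intervalIntegral.integral_const_mul] at hintegral
  calc k * (a ^ 2 / (1 - a ^ 2)) * f a ^ 2 - k * (c ^ 2 / (1 - c ^ 2)) * f c ^ 2
      = a * (k * (a / (1 - a ^ 2))) * f a ^ 2 - c * (k * (c / (1 - c ^ 2))) * f c ^ 2 := by ring
    _ ≤ _ := hintegral

lemma average_potential_bound_interval {r ρ : ℝ} (hr : 0 < r) (hrρ : r ≤ ρ) (hρ : ρ < 1)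
    (hf : ∀ s ∈ Set.Icc 0 ρ, HasDerivAt f (f' s) s) (hf' : ContinuousOn f' (Set.Icc 0 ρ))
    (hfρ : f ρ = 0) :
    (3 / 4 - r ^ 4) / r ^ 2 * ∫ s in 0..r, s * (f s ^ 2 / (1 - s ^ 2) ^ 2)
      ≤ (∫ s in 0..ρ, s * f' s ^ 2) - (∫ s in 0..ρ, s * (f s ^ 2 / (1 - s ^ 2) ^ 2))
        + f r ^ 2 / (2 * (1 - r ^ 2)) := by
  have hr1 : 0 < 1 - r ^ 2 := one_sub_sq_pos_of_mem_Icc neg_one_lt_zero hρ ⟨hr.le, hrρ⟩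
  have hleft : Set.Icc 0 r ⊆ Set.Icc 0 ρ := Set.Icc_subset_Icc_right hrρ
  have hright : Set.Icc r ρ ⊆ Set.Icc 0 ρ := Set.Icc_subset_Icc_left hr.le
  have hinner := hardy_interval (k := (1 / 2 + r ^ 2) / r ^ 2) (m := 1 + (3 / 4 - r ^ 4) / r ^ 2)
    le_rfl hr.le (hrρ.trans_lt hρ) (by field_simp; linarith)
    (fun s hs => hf s (hleft hs)) (hf'.mono hleft)
  have houter := hardy_interval (k := 1) (m := 1) hr.le hrρ hρ (by nlinarith)
    (fun s hs => hf s (hright hs)) (hf'.mono hright)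
  have hboundary : (1 / 2 + r ^ 2) / r ^ 2 * (r ^ 2 / (1 - r ^ 2)) * f r ^ 2
      - r ^ 2 / (1 - r ^ 2) * f r ^ 2 = f r ^ 2 / (2 * (1 - r ^ 2)) := by
    field_simp
    ring
  have henergy : ContinuousOn (fun s => s * f' s ^ 2) (Set.Icc 0 ρ) := by fun_prop
  have hpotential : ContinuousOn (fun s => s * (f s ^ 2 / (1 - s ^ 2) ^ 2)) (Set.Icc 0 ρ) :=
    continuousOn_mul_sq_div_one_sub_sq_sq neg_one_lt_zero hρ
      fun s hs => (hf s hs).continuousAt.continuousWithinAt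
  rw [← intervalIntegral.integral_add_adjacent_intervals
      ((henergy.mono hleft).intervalIntegrable_of_Icc hr.le)
      ((henergy.mono hright).intervalIntegrable_of_Icc hrρ),
    ← intervalIntegral.integral_add_adjacent_intervals
      ((hpotential.mono hleft).intervalIntegrable_of_Icc hr.le)
      ((hpotential.mono hright).intervalIntegrable_of_Icc hrρ)]
  rw [hfρ] at houter
  linarith

end Interval

section Radial

variable {E F : Type*} [NormedAddCommGroup E] [NormedSpace ℝ E] [NormedAddCommGroup F]
  [NormedSpace ℝ F]

lemma setIntegral_ball_fun_norm_addHaar [Nontrivial E] [FiniteDimensional ℝ E] [MeasurableSpace E]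
    [BorelSpace E] (μ : Measure E) [μ.IsAddHaarMeasure] (g : ℝ → F) {R : ℝ} (hR : 0 ≤ R) :
    ∫ x in Metric.ball (0 : E) R, g ‖x‖ ∂μ
      = Module.finrank ℝ E • μ.real (Metric.ball 0 1) •
        ∫ s in 0..R, s ^ (Module.finrank ℝ E - 1) • g s := by
  have hball : (Metric.ball (0 : E) R).indicator (fun x => g ‖x‖)
      = fun x => (Set.Iio R).indicator g ‖x‖ := by
    ext x
    simp [Set.indicator]
  rw [← integral_indicator Metric.isOpen_ball.measurableSet, hball, integral_fun_norm_addHaar μ,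
    intervalIntegral.integral_of_le hR, integral_Ioc_eq_integral_Ioo]
  have hsmul (s : ℝ) : s ^ (Module.finrank ℝ E - 1) • (Set.Iio R).indicator g s
      = (Set.Iio R).indicator (fun s => s ^ (Module.finrank ℝ E - 1) • g s) s :=
    (Set.indicator_smul_apply _ (fun s => s ^ (Module.finrank ℝ E - 1)) g s).symm
  simp only [hsmul]
  rw [setIntegral_indicator measurableSet_Iio, Set.Ioi_inter_Iio]

lemma norm_deriv_radial_le {u : E → F} (hrad : u.FactorsThrough norm) {x e : E} (he : ‖e‖ = 1)
    (hu : DifferentiableAt ℝ u x) :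
    ‖deriv (fun s : ℝ => u (s • e)) ‖x‖‖ ≤ ‖fderiv ℝ u x‖ := by
  obtain ⟨e', he', hxe'⟩ : ∃ e' : E, ‖e'‖ = 1 ∧ ‖x‖ • e' = x := by
    rcases eq_or_ne x 0 with rfl | hx
    · exact ⟨e, he, by simp⟩
    · exact ⟨‖x‖⁻¹ • x, norm_smul_inv_norm hx, smul_inv_smul₀ (norm_ne_zero_iff.2 hx) x⟩
  have hdirection : (fun s : ℝ => u (s • e)) = fun s : ℝ => u (s • e') :=
    funext fun s => hrad (by simp [norm_smul, he, he'])
  have hray : HasDerivAt (fun s : ℝ => s • e') e' ‖x‖ := by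
    simpa using (hasDerivAt_id ‖x‖).smul_const e'
  have hderiv : HasDerivAt (fun s : ℝ => u (s • e')) (fderiv ℝ u x e') ‖x‖ :=
    (hxe'.symm ▸ hu.hasFDerivAt : HasFDerivAt u (fderiv ℝ u x) (‖x‖ • e')).comp_hasDerivAt _ hray
  rw [hdirection, hderiv.deriv]
  simpa [he'] using (fderiv ℝ u x).le_opNorm e'

end Radial

lemma exists_mem_Ico_subset_ball {X : Type*} [PseudoMetricSpace X] [ProperSpace X] {K : Set X}
    {x : X} {r R : ℝ} (hK : IsClosed K) (hKR : K ⊆ Metric.ball x R) (hr : r < R) :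
    ∃ ρ ∈ Set.Ico r R, K ⊆ Metric.ball x ρ := by
  obtain ⟨ρ, hρ, hKρ⟩ := exists_lt_subset_ball hK hKR
  exact ⟨max r ρ, ⟨le_max_left _ _, max_lt hr hρ⟩,
    hKρ.trans (Metric.ball_subset_ball (le_max_right _ _))⟩

section Disc

variable {u : E2 → ℝ}

lemma IsSigma.factorsThrough_norm (hu : IsSigma u) : u.FactorsThrough norm :=
  fun x y hxy => le_antisymm (hu.2 y x hxy.ge) (hu.2 x y hxy.le)

lemma setIntegral_disc_fun_norm (g : ℝ → ℝ) {R : ℝ} (hR : 0 ≤ R) :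
    ∫ x in Metric.ball (0 : E2) R, g ‖x‖ = 2 * π * ∫ s in 0..R, s * g s := by
  have hvolume : (volume : Measure E2).real (Metric.ball 0 1) = π := by
    simp [Measure.real, E2, pi_nonneg]
  rw [setIntegral_ball_fun_norm_addHaar volume g hR, hvolume]
  simp [E2, mul_assoc]

lemma HOn_eq_of_tsupport_subset {Ω Ω' : Set E2} (hΩ' : MeasurableSet Ω') (hu : tsupport u ⊆ Ω)
    (hΩ : Ω ⊆ Ω') : HOn Ω' u = HOn Ω u := by
  have hzero {x : E2} (hx : x ∈ Ω' \ Ω) : x ∉ tsupport u := fun h => hx.2 (hu h)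
  unfold HOn
  congr 1
  · refine setIntegral_eq_of_subset_of_forall_sdiff_eq_zero hΩ' hΩ fun x hx => ?_
    simp [gradient, fderiv_of_notMem_tsupport ℝ (hzero hx)]
  · refine setIntegral_eq_of_subset_of_forall_sdiff_eq_zero hΩ' hΩ fun x hx => ?_
    simp [image_eq_zero_of_notMem_tsupport (hzero hx)]

lemma norm_pt_s10 (s : ℝ) : ‖pt s‖ = |s| := by simp [pt]

lemma pt_eq_smul (s : ℝ) : pt s = s • pt 1 := by
  ext i
  simp [pt]

lemma contDiff_pt {n : WithTop ℕ∞} : ContDiff ℝ n pt := by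
  rw [funext pt_eq_smul]
  fun_prop

lemma setIntegral_disc_potential (hrad : u.FactorsThrough norm) {R : ℝ} (hR : 0 ≤ R) :
    ∫ x in Metric.ball (0 : E2) R, u x ^ 2 / (1 - ‖x‖ ^ 2) ^ 2
      = 2 * π * ∫ s in 0..R, s * (u (pt s) ^ 2 / (1 - s ^ 2) ^ 2) := by
  rw [← setIntegral_disc_fun_norm (fun s => u (pt s) ^ 2 / (1 - s ^ 2) ^ 2) hR]
  have hprofile (x : E2) : u x = u (pt ‖x‖) := hrad (by simp [norm_pt_s10])
  simp only [← hprofile]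

lemma integral_deriv_sq_le_setIntegral_gradient_sq (hu : ContDiff ℝ 1 u)
    (hrad : u.FactorsThrough norm) {R : ℝ} (hR : 0 ≤ R) :
    2 * π * ∫ s in 0..R, s * deriv (fun s => u (pt s)) s ^ 2
      ≤ ∫ x in Metric.ball (0 : E2) R, ‖gradient u x‖ ^ 2 := by
  have hderiv : Continuous (deriv fun s => u (pt s)) :=
    (hu.comp contDiff_pt).continuous_deriv le_rfl
  have hgradient : Continuous (gradient u) :=
    (InnerProductSpace.toDual ℝ E2).symm.continuous.comp (hu.continuous_fderiv one_ne_zero)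
  have hintegrable {g : E2 → ℝ} (hg : Continuous g) : IntegrableOn g (Metric.ball 0 R) :=
    (hg.continuousOn.integrableOn_compact (isCompact_closedBall 0 R)).mono_set
      Metric.ball_subset_closedBall
  rw [← setIntegral_disc_fun_norm (fun s => deriv (fun s => u (pt s)) s ^ 2) hR]
  refine setIntegral_mono (hintegrable (by fun_prop)) (hintegrable (by fun_prop)) fun x => ?_
  have hradial := norm_deriv_radial_le hrad (e := pt 1) (by simp [norm_pt_s10])
    (hu.differentiable one_ne_zero x)
  simp only [← pt_eq_smul] at hradial
  simpa [gradient] using pow_le_pow_left₀ (norm_nonneg _) hradial 2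

theorem average_potential_bound_general (hu : ContDiff ℝ 1 u) (hsupp : tsupport u ⊆ B2)
    (hrad : u.FactorsThrough norm) {r : ℝ} (hr : 0 < r) (hr1 : r < 1) :
    π * (3 / 4 - r ^ 4) *
        ((1 / (π * r ^ 2)) * ∫ x in Metric.ball (0 : E2) r, u x ^ 2 / (1 - ‖x‖ ^ 2) ^ 2)
      ≤ H u + π * u (pt r) ^ 2 / (1 - r ^ 2) := by
  obtain ⟨ρ, ⟨hrρ, hρ⟩, hball⟩ := exists_mem_Ico_subset_ball (isClosed_tsupport u) hsupp hr1
  have hρ0 : 0 ≤ ρ := hr.le.trans hrρ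
  have hprofile : ContDiff ℝ 1 fun s => u (pt s) := hu.comp contDiff_pt
  have hvanish : u (pt ρ) = 0 := image_eq_zero_of_notMem_tsupport fun h => by
    simpa [norm_pt_s10, abs_of_nonneg hρ0] using hball h
  have hinterval := average_potential_bound_interval hr hrρ hρ
    (fun s _ => (hprofile.differentiable one_ne_zero s).hasDerivAt)
    (hprofile.continuous_deriv le_rfl).continuousOn hvanish
  have hH : H u = HOn (Metric.ball 0 ρ) u :=
    HOn_eq_of_tsupport_subset Metric.isOpen_ball.measurableSet hball
      (Metric.ball_subset_ball hρ.le)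
  have henergy := integral_deriv_sq_le_setIntegral_gradient_sq hu hrad hρ0
  rw [hH, HOn, setIntegral_disc_potential hrad hr.le, setIntegral_disc_potential hrad hρ0]
  set V₁ := ∫ s in 0..r, s * (u (pt s) ^ 2 / (1 - s ^ 2) ^ 2)
  set V := ∫ s in 0..ρ, s * (u (pt s) ^ 2 / (1 - s ^ 2) ^ 2)
  set D := ∫ s in 0..ρ, s * deriv (fun s => u (pt s)) s ^ 2
  calc π * (3 / 4 - r ^ 4) * (1 / (π * r ^ 2) * (2 * π * V₁))
      = 2 * π * ((3 / 4 - r ^ 4) / r ^ 2 * V₁) := by field_simp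
    _ ≤ 2 * π * (D - V + u (pt r) ^ 2 / (2 * (1 - r ^ 2))) := by gcongr
    _ = 2 * π * D - 2 * π * V + π * u (pt r) ^ 2 / (1 - r ^ 2) := by
      rw [div_mul_eq_div_div]; ring
    _ ≤ _ := by gcongr

end Disc

/-- Lemma 5: for `u ∈ Σ` and `r ∈ (0, 1)`,
`π(1/2 − r²) A_u(r) ≤ H(u) + π u(r)²/(1 − r²)`, where
`A_u(r) = (1/(πr²)) ∫_{B_r} u²/(1−|x|²)²`. -/
theorem average_potential_bound :
    ∀ u : E2 → ℝ, IsSigma u → ∀ r : ℝ, 0 < r → r < 1 →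
      π * (1 / 2 - r ^ 2) *
          ((1 / (π * r ^ 2)) * ∫ x in Metric.ball (0 : E2) r, (u x) ^ 2 / (1 - ‖x‖ ^ 2) ^ 2)
        ≤ H u + π * (u (pt r)) ^ 2 / (1 - r ^ 2) := by
  intro u hu r hr hr1
  have hconstant : 1 / 2 - r ^ 2 ≤ 3 / 4 - r ^ 4 := by
    linarith [pow_le_pow_of_le_one hr.le hr1.le (show 2 ≤ 4 by norm_num)]
  exact le_trans (by gcongr) <| average_potential_bound_general (hu.1.1.of_le (by simp)) hu.1.2.2
    hu.factorsThrough_norm hr hr1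
end
end
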